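/- Let G be a Hausdorff étale groupoid, let (Σ, i, q) be a discrete twist by T ≤ R^× over G with continuous global section P : G → Σ, and let σ : G^(2) → T be the continuous 2-cocycle induced by P. Then for all composable (α,β) ∈ G^(2): P(α)P(β) = σ(α,β) · P(αβ) and P(α)^{-1} = σ(α,α^{-1})^{-1} · P(α^{-1}), and the map φ_P : G ×_σ T → Σ defined by φ_P(α,z) = z · P(α) is an isomorphism of the discrete twists G ×_σ T and Σ (a groupoid isomorphism satisfying φ_P ∘ i_σ = i and q ∘ φ_P = q_σ). -/

import Mathlib

/-!
The fibres of `q` are free transitive `T`-sets: freeness holds because `i` is injective and `ε` can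
be cancelled from `z ⬝ ε = w ⬝ ε`, and transitivity because `ε δ⁻¹` lies over a unit, hence in the
image of `i`, whenever `q ε = q δ`. Consequently every `ε : Σ` is `z ⬝ P (q ε)` for a unique `z`,
so `φ_P` is bijective. Centrality of the image of `i` makes the action commute with multiplication
on both sides, `(z ⬝ ε) (w ⬝ δ) = (z w) ⬝ (ε δ)`; with `P(α) P(β) = σ(α,β) ⬝ P(αβ)` this gives
multiplicativity, and with `β = α⁻¹` it gives the formula for `P(α)⁻¹`.

The one topological point is that `φ_P` is open. Over a trivialising open set `B` with local section
`P'`, the sets `{w ⬝ P'(β) : β ∈ U}` (`U ⊆ B` open) are open in `Σ`. Since `T` is discrete and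
`β ↦ z ⬝ P(β)` is continuous, near a given point the continuous section `z ⬝ P` coincides with
`w ⬝ P'` for a constant `w`, so `φ_P` carries small neighbourhoods to open sets.
-/

/-!
Common definitions: topological groupoids, bisections, étale/ample groupoids,
continuous `Rˣ`-valued 2-cocycles, and twisted Steinberg algebras.

A groupoid is modelled as a type `G` together with a composability predicate
`comp`, a (partial, junk-valued off composable pairs) multiplication `mul`,
and an inversion `inv`.  The range and source maps are `r γ = γ γ⁻¹` and
`s γ = γ⁻¹ γ`, and the unit space is the set of fixed points of `r`.
-/

namespace TwistedSteinberg

structure GroupoidStruct (G : Type*) where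
  comp : G → G → Prop
  mul : G → G → G
  inv : G → G

namespace GroupoidStruct

variable {G : Type*}

/-- The range map `r γ = γ γ⁻¹`. -/
def r (T : GroupoidStruct G) (γ : G) : G := T.mul γ (T.inv γ)

/-- The source map `s γ = γ⁻¹ γ`. -/
def s (T : GroupoidStruct G) (γ : G) : G := T.mul (T.inv γ) γ

/-- The unit space `G⁰`. -/
def unitSpace (T : GroupoidStruct G) : Set G := {x | T.r x = x}

/-- The axioms making `(comp, mul, inv)` a groupoid. -/
structure IsGroupoid (T : GroupoidStruct G) : Prop where
  comp_iff : ∀ a b, T.comp a b ↔ T.s a = T.r b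
  assoc : ∀ a b c, T.comp a b → T.comp b c →
    T.mul (T.mul a b) c = T.mul a (T.mul b c)
  inv_inv : ∀ a, T.inv (T.inv a) = a
  r_mul : ∀ a b, T.comp a b → T.r (T.mul a b) = T.r a
  s_mul : ∀ a b, T.comp a b → T.s (T.mul a b) = T.s b
  r_inv : ∀ a, T.r (T.inv a) = T.s a
  s_inv : ∀ a, T.s (T.inv a) = T.r a
  r_mul_self : ∀ a, T.mul (T.r a) a = a
  mul_s_self : ∀ a, T.mul a (T.s a) = a
  r_unit : ∀ a, T.r a ∈ T.unitSpace
  s_unit : ∀ a, T.s a ∈ T.unitSpace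

/-- A topological groupoid: inversion is continuous and multiplication is
continuous on the set of composable pairs. -/
structure IsTopGroupoid [TopologicalSpace G] (T : GroupoidStruct G)
    extends IsGroupoid T : Prop where
  continuous_inv : Continuous T.inv
  continuousOn_mul : ContinuousOn (fun p : G × G => T.mul p.1 p.2)
    {p : G × G | T.comp p.1 p.2}

/-- `B` is a bisection if it is contained in an open set `U` on which both `r`
and `s` restrict to homeomorphisms onto open subsets. -/
def IsBisection [TopologicalSpace G] (T : GroupoidStruct G) (B : Set G) : Prop :=
  ∃ U : Set G, B ⊆ U ∧ IsOpen U ∧ Set.InjOn T.r U ∧ Set.InjOn T.s U ∧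
    ∀ V : Set G, V ⊆ U → IsOpen V → IsOpen (T.r '' V) ∧ IsOpen (T.s '' V)

/-- A groupoid is étale if its range map is a local homeomorphism. -/
def IsEtale [TopologicalSpace G] (T : GroupoidStruct G) : Prop :=
  IsLocalHomeomorph T.r

/-- A groupoid is ample if it has a basis of compact open bisections. -/
def IsAmple [TopologicalSpace G] (T : GroupoidStruct G) : Prop :=
  TopologicalSpace.IsTopologicalBasis
    {B : Set G | IsCompact B ∧ IsOpen B ∧ T.IsBisection B}

/-- The product `BD` of two subsets of a groupoid. -/
def setMul (T : GroupoidStruct G) (B D : Set G) : Set G :=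
  {x | ∃ a ∈ B, ∃ b ∈ D, T.comp a b ∧ T.mul a b = x}

end GroupoidStruct

open GroupoidStruct

section Cocycle

variable {G R : Type*} [TopologicalSpace G] [CommRing R] [TopologicalSpace R]

/-- A continuous normalised `Rˣ`-valued 2-cocycle on the groupoid `T`. -/
structure IsCocycle (T : GroupoidStruct G) (σ : G → G → Rˣ) : Prop where
  continuousOn : ContinuousOn (fun p : G × G => ((σ p.1 p.2 : Rˣ) : R))
    {p : G × G | T.comp p.1 p.2}
  cocycle : ∀ a b c, T.comp a b → T.comp b c →
    σ a b * σ (T.mul a b) c = σ a (T.mul b c) * σ b c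
  norm_left : ∀ γ : G, σ (T.r γ) γ = 1
  norm_right : ∀ γ : G, σ γ (T.s γ) = 1

/-- The underlying `R`-module of the (twisted) Steinberg algebra: locally
constant compactly supported functions `G → R`. -/
def steinbergCarrier (G R : Type*) [TopologicalSpace G] [Zero R] : Set (G → R) :=
  {f | IsLocallyConstant f ∧ IsCompact (Function.support f)}

/-- The twisted convolution product
`(f *σ g)(γ) = ∑_{αβ = γ} σ(α,β) f(α) g(β)`. -/
noncomputable def conv (T : GroupoidStruct G) (σ : G → G → Rˣ)
    (f g : G → R) (γ : G) : R :=
  ∑ᶠ (p : G × G) (_ : T.comp p.1 p.2 ∧ T.mul p.1 p.2 = γ),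
    ((σ p.1 p.2 : Rˣ) : R) * f p.1 * g p.2

/-- A `T`-inverse involution on `R`: a ring involution restricting to
inversion on the subgroup `Tsub ≤ Rˣ`. -/
def IsTInverseInvolution (Tsub : Subgroup Rˣ) (c : R → R) : Prop :=
  c 1 = 1 ∧ (∀ x y, c (x + y) = c x + c y) ∧ (∀ x y, c (x * y) = c x * c y) ∧
    (∀ x, c (c x) = x) ∧ ∀ z : Rˣ, z ∈ Tsub → c ((z : Rˣ) : R) = ((z⁻¹ : Rˣ) : R)

/-- The twisted involution `f*(γ) = σ(γ,γ⁻¹)⁻¹ ⬝ c (f (γ⁻¹))`. -/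
noncomputable def convStar (T : GroupoidStruct G) (σ : G → G → Rˣ) (c : R → R)
    (f : G → R) (γ : G) : R :=
  (((σ γ (T.inv γ))⁻¹ : Rˣ) : R) * c (f (T.inv γ))

end Cocycle
section Twist

/-!
Discrete twists `G⁰ × T → Σ → G` over a Hausdorff étale groupoid `G`,
where `T = Tsub` is a subgroup of the units `Rˣ` of a discrete commutative
unital ring `R`.  The inclusion is modelled as a map `i : G → Tsub → Σ`
(only its values `i x z` for `x ∈ G⁰` are relevant).
-/

variable {G S R : Type*} [TopologicalSpace G] [TopologicalSpace S]
  [CommRing R] [TopologicalSpace R]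

/-- A discrete twist `(Σ, i, q)` by `Tsub ≤ Rˣ` over `G`. -/
structure IsDiscreteTwist (TG : GroupoidStruct G) (TS : GroupoidStruct S)
    (Tsub : Subgroup Rˣ) (i : G → Tsub → S) (q : S → G) : Prop where
  topS : TS.IsTopGroupoid
  t2S : T2Space S
  locallyCompactS : LocallyCompactSpace S
  unit_eq : TS.unitSpace = (fun x => i x 1) '' TG.unitSpace
  i_continuousOn : ContinuousOn (fun p : G × Tsub => i p.1 p.2)
    (TG.unitSpace ×ˢ (Set.univ : Set Tsub))
  i_injective : ∀ x ∈ TG.unitSpace, ∀ x' ∈ TG.unitSpace, ∀ z z' : Tsub,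
    i x z = i x' z' → x = x' ∧ z = z'
  i_comp : ∀ x ∈ TG.unitSpace, ∀ z w : Tsub, TS.comp (i x z) (i x w)
  i_mul : ∀ x ∈ TG.unitSpace, ∀ z w : Tsub, TS.mul (i x z) (i x w) = i x (z * w)
  i_inv : ∀ x ∈ TG.unitSpace, ∀ z : Tsub, TS.inv (i x z) = i x z⁻¹
  q_continuous : Continuous q
  q_surjective : Function.Surjective q
  q_quotient : ∀ V : Set G, IsOpen V ↔ IsOpen (q ⁻¹' V)
  q_comp : ∀ ε δ, TS.comp ε δ → TG.comp (q ε) (q δ)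
  q_mul : ∀ ε δ, TS.comp ε δ → q (TS.mul ε δ) = TG.mul (q ε) (q δ)
  q_inv : ∀ ε, q (TS.inv ε) = TG.inv (q ε)
  q_i : ∀ x ∈ TG.unitSpace, ∀ z : Tsub, q (i x z) = x
  i_q_unit : ∀ ε ∈ TS.unitSpace, i (q ε) 1 = ε
  q_unit_mem : ∀ ε ∈ TS.unitSpace, q ε ∈ TG.unitSpace
  exact_fibre : ∀ x ∈ TG.unitSpace, ∀ ε, q ε = x ↔ ∃ z : Tsub, ε = i x z
  central_comp_left : ∀ (ε : S) (z : Tsub), TS.comp (i (TG.r (q ε)) z) ε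
  central_comp_right : ∀ (ε : S) (z : Tsub), TS.comp ε (i (TG.s (q ε)) z)
  central : ∀ (ε : S) (z : Tsub),
    TS.mul (i (TG.r (q ε)) z) ε = TS.mul ε (i (TG.s (q ε)) z)
  locally_trivial : ∀ α : G, ∃ B : Set G, α ∈ B ∧ IsOpen B ∧ TG.IsBisection B ∧
    ∃ P : G → S, ContinuousOn P B ∧ (∀ β ∈ B, q (P β) = β) ∧
      Set.BijOn (fun p : G × Tsub => TS.mul (i (TG.r p.1) p.2) (P p.1))
        (B ×ˢ (Set.univ : Set Tsub)) (q ⁻¹' B) ∧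
      ContinuousOn (fun p : G × Tsub => TS.mul (i (TG.r p.1) p.2) (P p.1))
        (B ×ˢ (Set.univ : Set Tsub)) ∧
      ∀ V ⊆ B ×ˢ (Set.univ : Set Tsub), IsOpen V →
        IsOpen ((fun p : G × Tsub => TS.mul (i (TG.r p.1) p.2) (P p.1)) '' V)

/-- The action `z ⬝ ε = i(r(ε), z) ε` of `Tsub` on the twist `Σ`. -/
def twistAct (TG : GroupoidStruct G) (TS : GroupoidStruct S)
    {Tsub : Subgroup Rˣ} (i : G → Tsub → S) (q : S → G) (z : Tsub) (ε : S) : S :=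
  TS.mul (i (TG.r (q ε)) z) ε

/-- A continuous global section `P : G → Σ` of the twist. -/
def IsGlobalSection (TG : GroupoidStruct G) (TS : GroupoidStruct S)
    (q : S → G) (P : G → S) : Prop :=
  Continuous P ∧ (∀ γ, q (P γ) = γ) ∧ ∀ x ∈ TG.unitSpace, P x ∈ TS.unitSpace

/-- The 2-cocycle `σ` is induced by the section `P`, i.e.
`P(α) P(β) P(αβ)⁻¹ = i(r(α), σ(α,β))` for composable `(α,β)`. -/
def InducesCocycle (TG : GroupoidStruct G) (TS : GroupoidStruct S)
    {Tsub : Subgroup Rˣ} (i : G → Tsub → S) (P : G → S) (σ : G → G → Tsub) : Prop :=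
  ∀ α β, TG.comp α β →
    TS.mul (TS.mul (P α) (P β)) (TS.inv (P (TG.mul α β))) = i (TG.r α) (σ α β)

/-- A continuous normalised 2-cocycle with values in the subgroup `Tsub ≤ Rˣ`. -/
structure IsCocycleSub (TG : GroupoidStruct G) (Tsub : Subgroup Rˣ)
    (σ : G → G → Tsub) : Prop where
  continuousOn : ContinuousOn (fun p : G × G => (((σ p.1 p.2 : Rˣ)) : R))
    {p : G × G | TG.comp p.1 p.2}
  cocycle : ∀ a b c, TG.comp a b → TG.comp b c →
    σ a b * σ (TG.mul a b) c = σ a (TG.mul b c) * σ b c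
  norm_left : ∀ γ : G, σ (TG.r γ) γ = 1
  norm_right : ∀ γ : G, σ γ (TG.s γ) = 1

/-- `σ` and `τ` are cohomologous via the continuous function `b : G → Tsub`. -/
def CohomologousVia (TG : GroupoidStruct G) {Tsub : Subgroup Rˣ}
    (σ τ : G → G → Tsub) (b : G → Tsub) : Prop :=
  Continuous (fun γ : G => ((b γ : Rˣ) : R)) ∧ (∀ x ∈ TG.unitSpace, b x = 1) ∧
    ∀ α β, TG.comp α β → σ α β * (τ α β)⁻¹ = b α * b β * (b (TG.mul α β))⁻¹

/-- The twisted groupoid `G ×_σ T`. -/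
def prodTwist (TG : GroupoidStruct G) (Tsub : Subgroup Rˣ) (σ : G → G → Tsub) :
    GroupoidStruct (G × Tsub) where
  comp p p' := TG.comp p.1 p'.1
  mul p p' := (TG.mul p.1 p'.1, σ p.1 p'.1 * p.2 * p'.2)
  inv p := (TG.inv p.1, (σ p.1 (TG.inv p.1))⁻¹ * p.2⁻¹)

/-- The inclusion `i_σ : G⁰ × T → G ×_σ T`. -/
def prodTwistI (Tsub : Subgroup Rˣ) : G → Tsub → G × Tsub := fun x z => (x, z)

/-- The projection `q_σ : G ×_σ T → G`. -/
def prodTwistQ (Tsub : Subgroup Rˣ) : G × Tsub → G := fun p => p.1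

/-- An isomorphism of discrete twists: a homeomorphism and groupoid
isomorphism intertwining the inclusions and projections. -/
def IsTwistIso {S1 S2 : Type*} [TopologicalSpace S1] [TopologicalSpace S2]
    (TG : GroupoidStruct G) (T1 : GroupoidStruct S1) (T2 : GroupoidStruct S2)
    {Tsub : Subgroup Rˣ} (i1 : G → Tsub → S1) (q1 : S1 → G)
    (i2 : G → Tsub → S2) (q2 : S2 → G) (ψ : S1 → S2) : Prop :=
  Function.Bijective ψ ∧ Continuous ψ ∧ (∀ V : Set S1, IsOpen V → IsOpen (ψ '' V)) ∧
    (∀ δ ε, T1.comp δ ε → T2.comp (ψ δ) (ψ ε) ∧ ψ (T1.mul δ ε) = T2.mul (ψ δ) (ψ ε)) ∧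
    (∀ x ∈ TG.unitSpace, ∀ z : Tsub, ψ (i1 x z) = i2 x z) ∧
    ∀ ε, q2 (ψ ε) = q1 ε

/-- The carrier of the twisted Steinberg algebra `A_R(G; Σ)`: continuous
`Tsub`-equivariant functions `f : Σ → R` such that `q(supp f)` has compact
closure. -/
def twistCarrier (TG : GroupoidStruct G) (TS : GroupoidStruct S)
    {Tsub : Subgroup Rˣ} (i : G → Tsub → S) (q : S → G) : Set (S → R) :=
  {f | Continuous f ∧
    (∀ (z : Tsub) (ε : S), f (TS.mul (i (TG.r (q ε)) z) ε) = ((z : Rˣ) : R) * f ε) ∧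
    IsCompact (closure (q '' Function.support f))}

/-- The convolution `(f *_Σ g)(ε) = ∑_{γ ∈ G^{s(q(ε))}} f(ε P(γ)) g(P(γ)⁻¹)`. -/
noncomputable def twistConv (TG : GroupoidStruct G) (TS : GroupoidStruct S)
    (q : S → G) (P : G → S) (f g : S → R) (ε : S) : R :=
  ∑ᶠ (γ : G) (_ : TG.r γ = TG.s (q ε)), f (TS.mul ε (P γ)) * g (TS.inv (P γ))

/-- The involution `f*(ε) = c (f (ε⁻¹))` on `A_R(G; Σ)`. -/
def twistStar (TS : GroupoidStruct S) (c : R → R) (f : S → R) (ε : S) : R :=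
  c (f (TS.inv ε))

end Twist

namespace GroupoidStruct.IsGroupoid

variable {G : Type*} {T : GroupoidStruct G}

lemma comp_inv (h : T.IsGroupoid) (a : G) : T.comp a (T.inv a) :=
  (h.comp_iff _ _).2 (h.r_inv a).symm

lemma inv_comp (h : T.IsGroupoid) (a : G) : T.comp (T.inv a) a :=
  (h.comp_iff _ _).2 (h.s_inv a)

lemma s_r (h : T.IsGroupoid) (a : G) : T.s (T.r a) = T.r a :=
  (h.s_mul _ _ (h.comp_inv a)).trans (h.s_inv a)

lemma r_s (h : T.IsGroupoid) (a : G) : T.r (T.s a) = T.s a :=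
  (h.r_mul _ _ (h.inv_comp a)).trans (h.r_inv a)

lemma s_of_mem (h : T.IsGroupoid) {x : G} (hx : x ∈ T.unitSpace) : T.s x = x := by
  have hx : T.r x = x := hx
  have := h.s_r x
  rwa [hx] at this

lemma mul_mul_inv (h : T.IsGroupoid) {a b : G} (hab : T.comp a b) :
    T.mul (T.mul a b) (T.inv b) = a := by
  rw [h.assoc _ _ _ hab (h.comp_inv b)]
  have := h.mul_s_self a
  rwa [(h.comp_iff _ _).1 hab] at this

lemma mul_inv_mul (h : T.IsGroupoid) {a b : G} (hab : T.s a = T.s b) :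
    T.mul (T.mul a (T.inv b)) b = a := by
  rw [h.assoc _ _ _ ((h.comp_iff _ _).2 (hab.trans (h.r_inv b).symm)) (h.inv_comp b)]
  have := h.mul_s_self a
  rwa [hab] at this

lemma mul_right_cancel (h : T.IsGroupoid) {a b c : G} (hac : T.comp a c) (hbc : T.comp b c)
    (e : T.mul a c = T.mul b c) : a = b := by
  rw [← h.mul_mul_inv hac, e, h.mul_mul_inv hbc]

lemma eq_inv_of_mul_eq_r (h : T.IsGroupoid) {a b : G} (hab : T.comp a b)
    (e : T.mul a b = T.r a) : T.inv a = b := by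
  have h1 : T.mul (T.inv a) (T.mul a b) = b := by
    rw [← h.assoc _ _ _ (h.inv_comp a) hab]
    have := h.r_mul_self b
    rwa [← (h.comp_iff _ _).1 hab] at this
  have h2 := h.mul_s_self (T.inv a)
  rw [h.s_inv] at h2
  rw [← h1, e, h2]

end GroupoidStruct.IsGroupoid

lemma GroupoidStruct.IsTopGroupoid.continuous_r {G : Type*} [TopologicalSpace G]
    {T : GroupoidStruct G} (h : T.IsTopGroupoid) : Continuous T.r :=
  h.continuousOn_mul.comp_continuous (continuous_id.prodMk h.continuous_inv)
    h.toIsGroupoid.comp_inv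

namespace IsDiscreteTwist

variable {G S R : Type*} [TopologicalSpace G] [TopologicalSpace S]
  [CommRing R] [TopologicalSpace R] {TG : GroupoidStruct G} {TS : GroupoidStruct S}
  {Tsub : Subgroup Rˣ} {i : G → Tsub → S} {q : S → G}

lemma q_r (h : IsDiscreteTwist TG TS Tsub i q) (ε : S) : q (TS.r ε) = TG.r (q ε) := by
  have := h.q_mul _ _ (h.topS.toIsGroupoid.comp_inv ε)
  rwa [h.q_inv] at this

lemma q_s (h : IsDiscreteTwist TG TS Tsub i q) (ε : S) : q (TS.s ε) = TG.s (q ε) := by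
  have := h.q_mul _ _ (h.topS.toIsGroupoid.inv_comp ε)
  rwa [h.q_inv] at this

lemma r_eq (h : IsDiscreteTwist TG TS Tsub i q) (ε : S) : TS.r ε = i (TG.r (q ε)) 1 := by
  rw [← h.q_r, h.i_q_unit _ (h.topS.r_unit ε)]

lemma s_eq (h : IsDiscreteTwist TG TS Tsub i q) (ε : S) : TS.s ε = i (TG.s (q ε)) 1 := by
  rw [← h.q_s, h.i_q_unit _ (h.topS.s_unit ε)]

/-- Composability in `Σ` is detected in `G`, as `q` is injective on units. -/
lemma comp_iff_q (h : IsDiscreteTwist TG TS Tsub i q) (hG : TG.IsGroupoid) (ε δ : S) :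
    TS.comp ε δ ↔ TG.comp (q ε) (q δ) := by
  refine ⟨h.q_comp _ _, fun H => ?_⟩
  rw [h.topS.comp_iff, h.s_eq, h.r_eq, (hG.comp_iff _ _).1 H]

lemma q_twistAct (h : IsDiscreteTwist TG TS Tsub i q) (hG : TG.IsGroupoid) (z : Tsub) (ε : S) :
    q (twistAct TG TS i q z ε) = q ε := by
  rw [twistAct, h.q_mul _ _ (h.central_comp_left ε z), h.q_i _ (hG.r_unit _), hG.r_mul_self]

lemma twistAct_comp_iff (h : IsDiscreteTwist TG TS Tsub i q) (hG : TG.IsGroupoid)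
    (z w : Tsub) (ε δ : S) :
    TS.comp (twistAct TG TS i q z ε) (twistAct TG TS i q w δ) ↔ TS.comp ε δ := by
  rw [h.comp_iff_q hG, h.q_twistAct hG, h.q_twistAct hG, h.comp_iff_q hG]

lemma one_twistAct (h : IsDiscreteTwist TG TS Tsub i q) (ε : S) :
    twistAct TG TS i q 1 ε = ε := by
  rw [twistAct, ← h.r_eq, h.topS.r_mul_self]

lemma twistAct_twistAct (h : IsDiscreteTwist TG TS Tsub i q) (hG : TG.IsGroupoid)
    (z w : Tsub) (ε : S) :
    twistAct TG TS i q z (twistAct TG TS i q w ε) = twistAct TG TS i q (z * w) ε := by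
  conv_lhs => rw [twistAct, h.q_twistAct hG, twistAct]
  rw [twistAct, ← h.topS.assoc _ _ _ (h.i_comp _ (hG.r_unit _) z w) (h.central_comp_left ε w),
    h.i_mul _ (hG.r_unit _)]

lemma twistAct_mul (h : IsDiscreteTwist TG TS Tsub i q) (hG : TG.IsGroupoid)
    (z : Tsub) {ε δ : S} (hc : TS.comp ε δ) :
    TS.mul (twistAct TG TS i q z ε) δ = twistAct TG TS i q z (TS.mul ε δ) := by
  rw [twistAct, twistAct, h.topS.assoc _ _ _ (h.central_comp_left ε z) hc, h.q_mul _ _ hc,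
    hG.r_mul _ _ (h.q_comp _ _ hc)]

lemma mul_twistAct (h : IsDiscreteTwist TG TS Tsub i q) (hG : TG.IsGroupoid)
    (z : Tsub) {ε δ : S} (hc : TS.comp ε δ) :
    TS.mul ε (twistAct TG TS i q z δ) = twistAct TG TS i q z (TS.mul ε δ) := by
  have hq := (hG.comp_iff _ _).1 (h.q_comp _ _ hc)
  have hr := h.central_comp_right ε z
  rw [hq] at hr
  rw [← h.twistAct_mul hG z hc, twistAct, twistAct, h.central ε, hq,
    h.topS.assoc _ _ _ hr (h.central_comp_left δ z)]

/-- The action of `T` on `Σ` is free. -/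
lemma twistAct_inj (h : IsDiscreteTwist TG TS Tsub i q) (hG : TG.IsGroupoid)
    {z w : Tsub} {ε : S} (e : twistAct TG TS i q z ε = twistAct TG TS i q w ε) : z = w :=
  (h.i_injective _ (hG.r_unit _) _ (hG.r_unit _) _ _
    (h.topS.toIsGroupoid.mul_right_cancel (h.central_comp_left ε z)
      (h.central_comp_left ε w) e)).2

/-- The action of `T` is transitive on the fibres of `q`. -/
lemma exists_twistAct (h : IsDiscreteTwist TG TS Tsub i q)
    (hG : TG.IsGroupoid) {ε δ : S} (e : q ε = q δ) : ∃ z, twistAct TG TS i q z δ = ε := by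
  have hs : TS.s ε = TS.s δ := by rw [h.s_eq, h.s_eq, e]
  have hc : TS.comp ε (TS.inv δ) :=
    (h.topS.comp_iff _ _).2 (hs.trans (h.topS.r_inv δ).symm)
  have hq : q (TS.mul ε (TS.inv δ)) = TG.r (q δ) := by
    rw [h.q_mul _ _ hc, h.q_inv, e]
    rfl
  obtain ⟨z, hz⟩ := (h.exact_fibre _ (hG.r_unit _) _).1 hq
  exact ⟨z, by rw [twistAct, ← hz, h.topS.toIsGroupoid.mul_inv_mul hs]⟩

lemma section_unit (h : IsDiscreteTwist TG TS Tsub i q) {P : G → S}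
    (hP : IsGlobalSection TG TS q P) {x : G} (hx : x ∈ TG.unitSpace) : P x = i x 1 := by
  have := h.i_q_unit _ (hP.2.2 x hx)
  rw [hP.2.1] at this
  exact this.symm

lemma section_mul (h : IsDiscreteTwist TG TS Tsub i q) (hG : TG.IsGroupoid) {P : G → S}
    (hP : IsGlobalSection TG TS q P) {σ : G → G → Tsub} (hind : InducesCocycle TG TS i P σ)
    {α β : G} (hc : TG.comp α β) :
    TS.mul (P α) (P β) = twistAct TG TS i q (σ α β) (P (TG.mul α β)) := by
  have hcS : TS.comp (P α) (P β) := by rwa [h.comp_iff_q hG, hP.2.1, hP.2.1]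
  have hs : TS.s (TS.mul (P α) (P β)) = TS.s (P (TG.mul α β)) := by
    rw [h.s_eq, h.s_eq, h.q_mul _ _ hcS, hP.2.1, hP.2.1, hP.2.1]
  rw [twistAct, hP.2.1, hG.r_mul _ _ hc, ← hind α β hc, h.topS.toIsGroupoid.mul_inv_mul hs]

lemma section_inv (h : IsDiscreteTwist TG TS Tsub i q) (hG : TG.IsGroupoid) {P : G → S}
    (hP : IsGlobalSection TG TS q P) {σ : G → G → Tsub} (hind : InducesCocycle TG TS i P σ)
    (α : G) :
    TS.inv (P α) = twistAct TG TS i q (σ α (TG.inv α))⁻¹ (P (TG.inv α)) := by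
  have hc : TS.comp (P α) (P (TG.inv α)) := by
    rw [h.comp_iff_q hG, hP.2.1, hP.2.1]
    exact hG.comp_inv α
  apply h.topS.toIsGroupoid.eq_inv_of_mul_eq_r
  · rw [h.comp_iff_q hG, h.q_twistAct hG]
    exact h.q_comp _ _ hc
  · rw [h.mul_twistAct hG _ hc, h.section_mul hG hP hind (hG.comp_inv α),
      h.twistAct_twistAct hG, inv_mul_cancel, h.one_twistAct, h.r_eq, hP.2.1]
    exact h.section_unit hP (hG.r_unit α)

lemma continuous_twistAct_section (h : IsDiscreteTwist TG TS Tsub i q) (hG : TG.IsTopGroupoid)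
    {P : G → S} (hP : IsGlobalSection TG TS q P) :
    Continuous (fun p : G × Tsub => twistAct TG TS i q p.2 (P p.1)) := by
  have hi : Continuous (fun p : G × Tsub => i (TG.r (q (P p.1))) p.2) := by
    refine h.i_continuousOn.comp_continuous
      (f := fun p : G × Tsub => (TG.r (q (P p.1)), p.2)) ?_
      fun p => ⟨hG.r_unit _, Set.mem_univ _⟩
    exact (hG.continuous_r.comp (h.q_continuous.comp (hP.1.comp continuous_fst))).prodMk
      continuous_snd
  exact h.topS.continuousOn_mul.comp_continuous (hi.prodMk (hP.1.comp continuous_fst))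
    fun p => h.central_comp_left _ _

lemma isOpenMap_twistAct_section [DiscreteTopology Tsub]
    (h : IsDiscreteTwist TG TS Tsub i q) (hG : TG.IsTopGroupoid)
    {P : G → S} (hP : IsGlobalSection TG TS q P) :
    IsOpenMap (fun p : G × Tsub => twistAct TG TS i q p.2 (P p.1)) := by
  intro V hV
  rw [isOpen_iff_forall_mem_open]
  rintro _ ⟨⟨α, z⟩, hαz, rfl⟩
  obtain ⟨B, hαB, hB, -, P', -, hP', hbij, -, hopen⟩ := h.locally_trivial α
  let ψ : G × Tsub → S := fun p => TS.mul (i (TG.r p.1) p.2) (P' p.1)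
  have hqψ : ∀ β ∈ B, ∀ w, q (ψ (β, w)) = β := fun β hβ w => by
    have := h.q_twistAct hG.toIsGroupoid w (P' β)
    rwa [twistAct, hP' β hβ] at this
  let f : G → S := fun β => twistAct TG TS i q z (P β)
  have hqf : ∀ β, q (f β) = β := fun β => by
    rw [h.q_twistAct hG.toIsGroupoid, hP.2.1]
  have hf : Continuous f :=
    (h.continuous_twistAct_section hG hP).comp (continuous_id.prodMk continuous_const)
  obtain ⟨⟨α', w⟩, ⟨hα'B, -⟩, hw⟩ := hbij.surjOn (show f α ∈ q ⁻¹' B by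
    simpa [hqf] using hαB)
  have hψopen : ∀ U ⊆ B, IsOpen U → IsOpen (ψ '' (U ×ˢ {w})) := fun U hU hUo =>
    hopen _ (Set.prod_mono hU (Set.subset_univ _)) (hUo.prod (isOpen_discrete _))
  -- `f` agrees with the constant translate `w ⬝ P'` of the local section on `U`
  let U : Set G := (B ∩ f ⁻¹' (ψ '' (B ×ˢ {w}))) ∩ (fun β => (β, z)) ⁻¹' V
  have hU : IsOpen U :=
    (hB.inter ((hψopen B subset_rfl hB).preimage hf)).inter
      (hV.preimage (continuous_id.prodMk continuous_const))
  have hUf : ∀ β ∈ U, ψ (β, w) = f β := by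
    rintro β ⟨⟨hβB, ⟨β', w'⟩, ⟨hβ'B, hw'⟩, e⟩, -⟩
    obtain rfl : w' = w := hw'
    have := hqψ β' hβ'B w'
    rw [e, hqf] at this
    rw [← this] at e
    exact e
  have hαU : α ∈ U := ⟨⟨hαB, (α', w), ⟨hα'B, rfl⟩, hw⟩, hαz⟩
  refine ⟨ψ '' (U ×ˢ {w}), ?_, hψopen U (fun β hβ => hβ.1.1) hU,
    (α, w), ⟨hαU, rfl⟩, hUf α hαU⟩
  rintro _ ⟨⟨β, w'⟩, ⟨hβ, hw'⟩, rfl⟩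
  obtain rfl : w' = w := hw'
  exact ⟨(β, z), hβ.2, (hUf β hβ).symm⟩

end IsDiscreteTwist

/-- Let `P` be a continuous global section of a discrete
twist `(Σ, i, q)` by `Tsub ≤ Rˣ` over a Hausdorff étale groupoid `G`, and
let `σ` be the induced continuous 2-cocycle.  Then
`P(α)P(β) = σ(α,β) ⬝ P(αβ)` and `P(α)⁻¹ = σ(α,α⁻¹)⁻¹ ⬝ P(α⁻¹)`, and
`φ_P(α,z) = z ⬝ P(α)` is an isomorphism of the discrete twists `G ×_σ T`
and `Σ`. -/
theorem globalSection_cocycle_properties_and_twist_iso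
    {G S R : Type*} [TopologicalSpace G] [TopologicalSpace S]
    [T2Space G] [LocallyCompactSpace G]
    [CommRing R] [TopologicalSpace R] [DiscreteTopology R]
    (TG : GroupoidStruct G) (hTG : TG.IsTopGroupoid) (hetale : TG.IsEtale)
    (TS : GroupoidStruct S) (Tsub : Subgroup Rˣ)
    (i : G → Tsub → S) (q : S → G)
    (hTw : IsDiscreteTwist TG TS Tsub i q)
    (P : G → S) (hP : IsGlobalSection TG TS q P)
    (σ : G → G → Tsub) (hσ : IsCocycleSub (R := R) TG Tsub σ)
    (hind : InducesCocycle TG TS i P σ) :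
    -- `P(α)P(β) = σ(α,β) ⬝ P(αβ)`
    (∀ α β, TG.comp α β →
      TS.mul (P α) (P β) = twistAct TG TS i q (σ α β) (P (TG.mul α β)))
    -- `P(α)⁻¹ = σ(α,α⁻¹)⁻¹ ⬝ P(α⁻¹)`
    ∧ (∀ α : G, TS.inv (P α) = twistAct TG TS i q (σ α (TG.inv α))⁻¹ (P (TG.inv α)))
    -- `φ_P : G ×_σ T → Σ` is an isomorphism of twists
    ∧ IsTwistIso TG (prodTwist TG Tsub σ) TS (prodTwistI Tsub) (prodTwistQ Tsub)
        i q (fun p : G × Tsub => twistAct TG TS i q p.2 (P p.1)) := by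
  have hG := hTG.toIsGroupoid
  refine ⟨fun α β hc => hTw.section_mul hG hP hind hc, hTw.section_inv hG hP hind,
    ⟨?_, ?_⟩, hTw.continuous_twistAct_section hTG hP, hTw.isOpenMap_twistAct_section hTG hP,
    ?_, ?_, ?_⟩
  · rintro ⟨α, z⟩ ⟨β, w⟩ e
    have hq := congrArg q e
    simp only [hTw.q_twistAct hG, hP.2.1] at hq
    subst hq
    exact Prod.ext rfl (hTw.twistAct_inj hG e)
  · intro ε
    obtain ⟨z, hz⟩ := hTw.exists_twistAct hG (hP.2.1 (q ε)).symm
    exact ⟨(q ε, z), hz⟩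
  · rintro ⟨α, z⟩ ⟨β, w⟩ (hc : TG.comp α β)
    have hcS : TS.comp (P α) (P β) := by rwa [hTw.comp_iff_q hG, hP.2.1, hP.2.1]
    have hcw : TS.comp (P α) (twistAct TG TS i q w (P β)) := by
      rwa [hTw.comp_iff_q hG, hTw.q_twistAct hG, hP.2.1, hP.2.1]
    refine ⟨(hTw.twistAct_comp_iff hG z w _ _).2 hcS, ?_⟩
    change twistAct TG TS i q (σ α β * z * w) (P (TG.mul α β)) =
      TS.mul (twistAct TG TS i q z (P α)) (twistAct TG TS i q w (P β))
    rw [hTw.twistAct_mul hG _ hcw, hTw.mul_twistAct hG _ hcS, hTw.section_mul hG hP hind hc,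
      hTw.twistAct_twistAct hG, hTw.twistAct_twistAct hG]
    congr 1
    rw [mul_assoc, mul_comm, mul_assoc]
  · intro x hx z
    have hx' : TG.r x = x := hx
    change twistAct TG TS i q z (P x) = i x z
    rw [twistAct, hP.2.1, hx', hTw.section_unit hP hx, hTw.i_mul x hx, mul_one]
  · rintro ⟨α, z⟩
    exact (hTw.q_twistAct hG z _).trans (hP.2.1 α)

end TwistedSteinberg
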